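/- Let d ≥ 1 and μ = -1 (the focusing case). If u is a classical solution of the mass-critical NLS on (0, ∞) × ℝ^d, then its pseudoconformal transform v(t, x) := t^{-d/2} · conj(u)(1/t, x/t) · e^{i |x|²/(4t)} is also a classical solution of the focusing mass-critical NLS on (0, ∞) × ℝ^d, where conj denotes complex conjugation. -/

import Mathlib

open MeasureTheory

noncomputable def spaceLaplacian {d : ℕ} (f : EuclideanSpace ℝ (Fin d) → ℂ)
    (x : EuclideanSpace ℝ (Fin d)) : ℂ :=
  ∑ j : Fin d, fderiv ℝ (fun y => fderiv ℝ f y (EuclideanSpace.single j 1)) x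
    (EuclideanSpace.single j 1)

def IsNLSSolution (d : ℕ) (μ : ℝ) (I : Set ℝ) (u : ℝ → EuclideanSpace ℝ (Fin d) → ℂ) : Prop :=
  ContDiffOn ℝ (⊤ : ℕ∞) (fun p : ℝ × EuclideanSpace ℝ (Fin d) => u p.1 p.2)
    (I ×ˢ (Set.univ : Set (EuclideanSpace ℝ (Fin d)))) ∧
  ∀ t ∈ I, ∀ x, Complex.I * deriv (fun s => u s x) t + spaceLaplacian (u t) x
    = (μ : ℂ) * ((‖u t x‖ ^ ((4 : ℝ) / d) : ℝ) : ℂ) * u t x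

/-- The spatial profile of the pseudoconformal transform. -/
noncomputable def pcProfile {d : ℕ} (c τ : ℝ) (A : ℂ) (f : EuclideanSpace ℝ (Fin d) → ℂ)
    (y : EuclideanSpace ℝ (Fin d)) : ℂ :=
  A * (starRingEnd ℂ) (f (c • y)) * Complex.exp (Complex.I * ((‖y‖ ^ 2 / (4 * τ) : ℝ) : ℂ))

lemma differentiable_pcProfile {d : ℕ} (c τ : ℝ) (A : ℂ) (f : EuclideanSpace ℝ (Fin d) → ℂ)
    (hf : Differentiable ℝ f) : Differentiable ℝ (pcProfile c τ A f) := by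
  unfold pcProfile
  have h1 : Differentiable ℝ (fun y : EuclideanSpace ℝ (Fin d) => f (c • y)) :=
    hf.comp (differentiable_id.const_smul c)
  have h2 : Differentiable ℝ (fun y : EuclideanSpace ℝ (Fin d) => (starRingEnd ℂ) (f (c • y))) :=
    Complex.conjCLE.differentiable.comp h1
  have h3 : Differentiable ℝ
      (fun y : EuclideanSpace ℝ (Fin d) => ((‖y‖ ^ 2 / (4 * τ) : ℝ) : ℂ)) :=
    Complex.ofRealCLM.differentiable.comp
      (by
        simp only [div_eq_mul_inv]
        exact (differentiable_id.norm_sq ℝ).mul_const _ :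
        Differentiable ℝ (fun y : EuclideanSpace ℝ (Fin d) => ‖y‖ ^ 2 / (4 * τ)))
  exact (h2.const_mul A).mul (h3.const_mul Complex.I).cexp

lemma hasDerivAt_line {d : ℕ} {g : EuclideanSpace ℝ (Fin d) → ℂ} {x e : EuclideanSpace ℝ (Fin d)}
    (hg : DifferentiableAt ℝ g x) :
    HasDerivAt (fun s : ℝ => g (x + s • e)) (fderiv ℝ g x e) 0 :=
  hg.hasFDerivAt.hasLineDerivAt e

lemma fderiv_pcProfile {d : ℕ} (c τ : ℝ) (A : ℂ) (f : EuclideanSpace ℝ (Fin d) → ℂ)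
    (hf : Differentiable ℝ f) (y : EuclideanSpace ℝ (Fin d)) (j : Fin d) :
    fderiv ℝ (pcProfile c τ A f) y (EuclideanSpace.single j 1)
      = pcProfile c τ (c * A) (fun z => fderiv ℝ f z (EuclideanSpace.single j 1)) y
        + Complex.I / (2 * τ) * (y j : ℂ) * pcProfile c τ A f y := by
  set e : EuclideanSpace ℝ (Fin d) := EuclideanSpace.single j 1 with he
  have h0 := hasDerivAt_line (e := e) (differentiable_pcProfile c τ A f hf y)
  refine h0.unique ?_
  have hl : HasDerivAt (fun s : ℝ => y + s • e) e 0 := by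
    simpa using ((hasDerivAt_id (0:ℝ)).smul_const e).const_add y
  have h1 : HasDerivAt (fun s : ℝ => f (c • (y + s • e))) (fderiv ℝ f (c • y) (c • e)) 0 := by
    have h := (hf (c • (y + (0:ℝ) • e))).hasFDerivAt.comp_hasDerivAt (0:ℝ) (hl.const_smul c)
    have h' : HasDerivAt (fun s : ℝ => f (c • (y + s • e))) _ 0 := h
    simpa using h'
  have h2 : HasDerivAt (fun s : ℝ => (starRingEnd ℂ) (f (c • (y + s • e))))
      ((starRingEnd ℂ) (fderiv ℝ f (c • y) (c • e))) 0 :=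
    Complex.conjCLE.toContinuousLinearMap.hasFDerivAt.comp_hasDerivAt (0:ℝ) h1
  have h3 : HasDerivAt (fun s : ℝ => ((‖y + s • e‖ ^ 2 / (4 * τ) : ℝ) : ℂ))
      ((2 * y j / (4 * τ) : ℝ) : ℂ) 0 := by
    have h := (hl.norm_sq.div_const (4 * τ)).ofReal_comp
    simpa [he, EuclideanSpace.inner_single_right] using h
  have h4 := (h2.const_mul A).mul (h3.const_mul Complex.I).cexp
  have h5 := h4.congr_deriv (g' := pcProfile c τ (c * A)
    (fun z => fderiv ℝ f z e) y + Complex.I / (2 * τ) * (y j : ℂ) * pcProfile c τ A f y) (by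
      simp only [pcProfile, map_smul, zero_smul, add_zero, Complex.real_smul, map_mul,
        Complex.conj_ofReal]
      have : ((2 * y j / (4 * τ) : ℝ) : ℂ) = (y j : ℂ) / (2 * τ) := by
        push_cast
        rw [show (4 * τ : ℂ) = 2 * (2 * τ) by ring, mul_div_mul_left _ _ (by norm_num)]
      rw [this]
      ring)
  exact h5

lemma fderiv_fderiv_pcProfile {d : ℕ} (c τ : ℝ) (A : ℂ) (f : EuclideanSpace ℝ (Fin d) → ℂ)
    (hf : ContDiff ℝ (⊤ : ℕ∞) f) (x : EuclideanSpace ℝ (Fin d)) (j : Fin d) :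
    fderiv ℝ (fun y => fderiv ℝ (pcProfile c τ A f) y (EuclideanSpace.single j 1)) x
        (EuclideanSpace.single j 1)
      = pcProfile c τ (c * (c * A)) (fun w => fderiv ℝ
          (fun z => fderiv ℝ f z (EuclideanSpace.single j 1)) w (EuclideanSpace.single j 1)) x
        + 2 * (Complex.I / (2 * τ) * (x j : ℂ)) * pcProfile c τ (c * A)
          (fun z => fderiv ℝ f z (EuclideanSpace.single j 1)) x
        + (Complex.I / (2 * τ) + (Complex.I / (2 * τ) * (x j : ℂ)) ^ 2) * pcProfile c τ A f x := by
  have hfd : Differentiable ℝ f := hf.differentiable (by simp)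
  have hf1 : Differentiable ℝ (fun z => fderiv ℝ f z (EuclideanSpace.single j (1:ℝ))) := by
    have : ContDiff ℝ 1 (fderiv ℝ f) := hf.fderiv_right (m := 1) (by
      rw [one_add_one_eq_two]; exact WithTop.coe_le_coe.mpr le_top)
    exact (this.differentiable (by simp)).clm_apply (differentiable_const _)
  have hfun : (fun y => fderiv ℝ (pcProfile c τ A f) y (EuclideanSpace.single j 1))
      = fun y => pcProfile c τ (c * A) (fun z => fderiv ℝ f z (EuclideanSpace.single j 1)) y
        + Complex.I / (2 * τ) * (y j : ℂ) * pcProfile c τ A f y := by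
    funext y
    exact fderiv_pcProfile c τ A f hfd y j
  rw [hfun]
  have hG1 := differentiable_pcProfile c τ (c * A) _ hf1
  have hG := differentiable_pcProfile c τ A f hfd
  have hc : Differentiable ℝ (fun y : EuclideanSpace ℝ (Fin d) => (y j : ℂ)) :=
    Complex.ofRealCLM.differentiable.comp (EuclideanSpace.proj (𝕜 := ℝ) j).differentiable
  have hD : Differentiable ℝ (fun y => pcProfile c τ (c * A)
      (fun z => fderiv ℝ f z (EuclideanSpace.single j 1)) y
        + Complex.I / (2 * τ) * (y j : ℂ) * pcProfile c τ A f y) :=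
    hG1.add ((hc.const_mul _).mul hG)
  have h0 := hasDerivAt_line (e := EuclideanSpace.single j 1) (hD x)
  refine h0.unique ?_
  have hl1 := hasDerivAt_line (e := EuclideanSpace.single j 1) (hG1 x)
  have hl := hasDerivAt_line (e := EuclideanSpace.single j 1) (hG x)
  have hcl : HasDerivAt (fun s : ℝ =>
      (((x + s • EuclideanSpace.single j (1:ℝ)) j : ℝ) : ℂ)) 1 0 := by
    have : HasDerivAt (fun s : ℝ => x j + s) 1 0 := by
      simpa using (hasDerivAt_id (0:ℝ)).const_add (x j)
    simpa using this.ofReal_comp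
  have h := hl1.add ((hcl.const_mul (Complex.I / (2 * τ))).mul hl)
  refine h.congr_deriv ?_
  rw [fderiv_pcProfile c τ A f hfd, fderiv_pcProfile c τ (c * A) _ hf1]
  simp only [zero_smul, add_zero]
  ring

lemma spaceLaplacian_pcProfile {d : ℕ} (c τ : ℝ) (A : ℂ) (f : EuclideanSpace ℝ (Fin d) → ℂ)
    (hf : ContDiff ℝ (⊤ : ℕ∞) f) (x : EuclideanSpace ℝ (Fin d)) :
    spaceLaplacian (pcProfile c τ A f) x
      = A * Complex.exp (Complex.I * ((‖x‖ ^ 2 / (4 * τ) : ℝ) : ℂ)) *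
        (c ^ 2 * (starRingEnd ℂ) (spaceLaplacian f (c • x))
          + Complex.I / τ * c * (starRingEnd ℂ) (fderiv ℝ f (c • x) x)
          + (Complex.I / (2 * τ) * d - (‖x‖ ^ 2 : ℝ) / (2 * τ) ^ 2)
            * (starRingEnd ℂ) (f (c • x))) := by
  have hx : fderiv ℝ f (c • x) x
      = ∑ j, (x j : ℂ) * fderiv ℝ f (c • x) (EuclideanSpace.single j 1) := by
    have : x = ∑ j, x j • EuclideanSpace.single j (1:ℝ) := by
      ext k
      simp [Finset.sum_apply, Pi.single_apply]
    conv_lhs => rw [this]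
    conv_lhs => arg 1; rw [← this]
    simp [map_sum]
  have hn : ((‖x‖ ^ 2 : ℝ) : ℂ) = ∑ j, (x j : ℂ) ^ 2 := by
    rw [EuclideanSpace.norm_sq_eq]
    simp [← Complex.ofReal_pow]
  have hdd : (d : ℂ) = ∑ _j : Fin d, (1 : ℂ) := by simp
  rw [hx, hn, hdd]
  unfold spaceLaplacian
  simp only [map_sum, map_mul, Complex.conj_ofReal]
  rw [← sub_eq_zero]
  simp only [fderiv_fderiv_pcProfile c τ A f hf]
  simp only [Finset.mul_sum, Finset.sum_div, ← Finset.sum_sub_distrib, ← Finset.sum_add_distrib,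
    Finset.sum_mul]
  refine Finset.sum_eq_zero fun j _ => ?_
  simp only [pcProfile]
  have hI : Complex.I ^ 2 = -1 := Complex.I_sq
  have h2 : Complex.I / (2 * (τ:ℂ)) * 2 = Complex.I / τ := by
    rw [div_mul_eq_mul_div, mul_comm Complex.I 2, mul_div_mul_left _ _ (by norm_num)]
  rw [← h2, mul_pow, div_pow, hI]
  ring

theorem nls_pseudoconformal_invariance (d : ℕ) (hd : 1 ≤ d)
    (u : ℝ → EuclideanSpace ℝ (Fin d) → ℂ)
    (hu : IsNLSSolution d (-1) (Set.Ioi (0:ℝ)) u) :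
    IsNLSSolution d (-1) (Set.Ioi (0:ℝ))
      (fun t x => ((t ^ (-(d : ℝ) / 2) : ℝ) : ℂ) *
        (starRingEnd ℂ) (u (1 / t) ((1 / t) • x)) *
        Complex.exp (Complex.I * ((‖x‖ ^ 2 / (4 * t) : ℝ) : ℂ))) := by
  obtain ⟨hsm, heq⟩ := hu
  have hopen : IsOpen (Set.Ioi (0:ℝ) ×ˢ (Set.univ : Set (EuclideanSpace ℝ (Fin d)))) :=
    isOpen_Ioi.prod isOpen_univ
  constructor
  · have hinv : ContDiffOn ℝ (⊤ : ℕ∞) (fun p : ℝ × EuclideanSpace ℝ (Fin d) => 1 / p.1)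
        (Set.Ioi (0:ℝ) ×ˢ Set.univ) :=
      contDiffOn_const.div contDiffOn_fst fun p hp => (ne_of_gt hp.1)
    have hmap : ContDiffOn ℝ (⊤ : ℕ∞)
        (fun p : ℝ × EuclideanSpace ℝ (Fin d) => (1 / p.1, (1 / p.1) • p.2))
        (Set.Ioi (0:ℝ) ×ˢ Set.univ) := hinv.prodMk (hinv.smul contDiffOn_snd)
    have h1 : ContDiffOn ℝ (⊤ : ℕ∞)
        (fun p : ℝ × EuclideanSpace ℝ (Fin d) => u (1 / p.1) ((1 / p.1) • p.2))
        (Set.Ioi (0:ℝ) ×ˢ Set.univ) :=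
      hsm.comp hmap fun p hp => ⟨Set.mem_Ioi.mpr (one_div_pos.mpr (Set.mem_Ioi.mp hp.1)), trivial⟩
    have h2 : ContDiffOn ℝ (⊤ : ℕ∞)
        (fun p : ℝ × EuclideanSpace ℝ (Fin d) =>
          (starRingEnd ℂ) (u (1 / p.1) ((1 / p.1) • p.2)))
        (Set.Ioi (0:ℝ) ×ˢ Set.univ) := Complex.conjCLE.contDiff.comp_contDiffOn h1
    have h3 : ContDiffOn ℝ (⊤ : ℕ∞)
        (fun p : ℝ × EuclideanSpace ℝ (Fin d) => ((p.1 ^ (-(d : ℝ) / 2) : ℝ) : ℂ))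
        (Set.Ioi (0:ℝ) ×ˢ Set.univ) :=
      Complex.ofRealCLM.contDiff.comp_contDiffOn
        (contDiffOn_fst.rpow_const_of_ne fun p hp => (ne_of_gt hp.1))
    have h4 : ContDiffOn ℝ (⊤ : ℕ∞)
        (fun p : ℝ × EuclideanSpace ℝ (Fin d) => ((‖p.2‖ ^ 2 / (4 * p.1) : ℝ) : ℂ))
        (Set.Ioi (0:ℝ) ×ˢ Set.univ) :=
      Complex.ofRealCLM.contDiff.comp_contDiffOn
        ((contDiffOn_snd.norm_sq ℝ).div (contDiffOn_const.mul contDiffOn_fst)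
          fun p hp => mul_ne_zero (by norm_num) (ne_of_gt hp.1))
    exact (h3.mul h2).mul (contDiffOn_const.mul h4).cexp
  · intro t ht x
    have ht0 : (0:ℝ) < t := ht
    have hs0 : (0:ℝ) < 1 / t := one_div_pos.mpr ht0
    have hf : ContDiff ℝ (⊤ : ℕ∞) (u (1 / t)) := by
      have h := hsm.comp (contDiffOn_const.prodMk contDiffOn_id :
        ContDiffOn ℝ (⊤ : ℕ∞) (fun y : EuclideanSpace ℝ (Fin d) => ((1 / t : ℝ), y)) Set.univ)
        (fun y _ => ⟨hs0, trivial⟩)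
      exact contDiffOn_univ.mp h
    have hlap := spaceLaplacian_pcProfile (1 / t) t ((t ^ (-(d : ℝ) / 2) : ℝ) : ℂ) _ hf x
    have hU : DifferentiableAt ℝ (fun p : ℝ × EuclideanSpace ℝ (Fin d) => u p.1 p.2)
        (1 / t, (1 / t) • x) :=
      (hsm.contDiffAt (hopen.mem_nhds
        (Set.mk_mem_prod (Set.mem_Ioi.mpr hs0) (Set.mem_univ _)))).differentiableAt (by simp)
    -- partial derivatives
    have hUt : HasDerivAt (fun s => u s ((1 / t) • x))
        (fderiv ℝ (fun p : ℝ × EuclideanSpace ℝ (Fin d) => u p.1 p.2)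
          (1 / t, (1 / t) • x) (1, 0)) (1 / t) :=
      HasFDerivAt.comp_hasDerivAt (f := fun s : ℝ => (s, (1 / t) • x)) (1 / t) hU.hasFDerivAt
        ((hasDerivAt_id (1 / t)).prodMk (hasDerivAt_const (1 / t) ((1 / t) • x)))
    have hUx : fderiv ℝ (u (1 / t)) ((1 / t) • x) x
        = fderiv ℝ (fun p : ℝ × EuclideanSpace ℝ (Fin d) => u p.1 p.2)
          (1 / t, (1 / t) • x) (0, x) := by
      have h : HasFDerivAt (fun y => u (1 / t) y) _ ((1 / t) • x) :=
        hU.hasFDerivAt.comp ((1 / t) • x)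
        (hasFDerivAt_prodMk_right (𝕜 := ℝ) (1 / t) ((1 / t) • x))
      rw [h.fderiv]
      simp
    have hinv : HasDerivAt (fun s : ℝ => 1 / s) (-(1 / t) ^ 2) t := by
      have h := hasDerivAt_inv ht0.ne'
      simpa [one_div] using h
    have hu1 : HasDerivAt (fun s : ℝ => u (1 / s) ((1 / s) • x))
        (((-(1 / t) ^ 2 : ℝ) : ℂ) * (deriv (fun s => u s ((1 / t) • x)) (1 / t)
          + fderiv ℝ (u (1 / t)) ((1 / t) • x) x)) t := by
      have h := hU.hasFDerivAt.comp_hasDerivAt t (hinv.prodMk (hinv.smul_const x))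
      refine h.congr_deriv ?_
      rw [hUt.deriv, hUx, ← map_add, ← Complex.real_smul, ← map_smul]
      simp
    have hu2 : HasDerivAt (fun s : ℝ => (starRingEnd ℂ) (u (1 / s) ((1 / s) • x))) _ t :=
      Complex.conjCLE.toContinuousLinearMap.hasFDerivAt.comp_hasDerivAt t hu1
    have hA : HasDerivAt (fun s : ℝ => ((s ^ (-(d : ℝ) / 2) : ℝ) : ℂ))
        (((-(d : ℝ) / 2 / t * t ^ (-(d : ℝ) / 2) : ℝ)) : ℂ) t := by
      have h := (Real.hasDerivAt_rpow_const (p := -(d : ℝ) / 2) (Or.inl ht0.ne')).ofReal_comp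
      refine h.congr_deriv ?_
      rw [Real.rpow_sub_one ht0.ne']
      push_cast
      ring
    have hE : HasDerivAt (fun s : ℝ => ((‖x‖ ^ 2 / (4 * s) : ℝ) : ℂ))
        ((-(‖x‖ ^ 2 / 4 * (1 / t) ^ 2) : ℝ) : ℂ) t := by
      have h := (hinv.const_mul (‖x‖ ^ 2 / 4)).ofReal_comp
      refine (h.congr_deriv (by push_cast; ring)).congr_of_eventuallyEq ?_
      refine Filter.Eventually.of_forall fun s => ?_
      simp only [div_eq_mul_inv, mul_inv]
      push_cast
      ring
    have hv := (hA.mul hu2).mul (hE.const_mul Complex.I).cexp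
    have hv' := hv.deriv
    have hnl := congrArg (starRingEnd ℂ) (heq (1 / t) hs0 ((1 / t) • x))
    simp only [map_add, map_mul, Complex.conj_I, Complex.conj_ofReal] at hnl
    have hnorm : ‖((t ^ (-(d : ℝ) / 2) : ℝ) : ℂ) *
        (starRingEnd ℂ) (u (1 / t) ((1 / t) • x)) *
        Complex.exp (Complex.I * ((‖x‖ ^ 2 / (4 * t) : ℝ) : ℂ))‖ ^ ((4 : ℝ) / d)
        = (1 / t) ^ 2 * ‖u (1 / t) ((1 / t) • x)‖ ^ ((4 : ℝ) / d) := by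
      have hd0 : (d : ℝ) ≠ 0 := by
        have : d ≠ 0 := by omega
        exact_mod_cast this
      rw [norm_mul, norm_mul, mul_comm Complex.I, Complex.norm_exp_ofReal_mul_I, mul_one,
        RCLike.norm_conj, Complex.norm_real, Real.norm_of_nonneg (by positivity),
        Real.mul_rpow (by positivity) (by positivity), ← Real.rpow_mul ht0.le]
      congr 1
      rw [show -(d : ℝ) / 2 * (4 / d) = -2 by field_simp; norm_num, Real.rpow_neg ht0.le]
      simp
    have key : Complex.I * deriv (fun s : ℝ => ((s ^ (-(d : ℝ) / 2) : ℝ) : ℂ) *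
        (starRingEnd ℂ) (u (1 / s) ((1 / s) • x)) *
        Complex.exp (Complex.I * ((‖x‖ ^ 2 / (4 * s) : ℝ) : ℂ))) t
        + spaceLaplacian (pcProfile (1 / t) t ((t ^ (-(d : ℝ) / 2) : ℝ) : ℂ) (u (1 / t))) x
        = ((-1 : ℝ) : ℂ) * (((1 / t) ^ 2 * ‖u (1 / t) ((1 / t) • x)‖ ^ ((4 : ℝ) / d) : ℝ) : ℂ) *
        (((t ^ (-(d : ℝ) / 2) : ℝ) : ℂ) *
        (starRingEnd ℂ) (u (1 / t) ((1 / t) • x)) *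
        Complex.exp (Complex.I * ((‖x‖ ^ 2 / (4 * t) : ℝ) : ℂ))) := by
      rw [hlap]
      refine (congrArg (fun z => Complex.I * z + _) hv').trans ?_
      have hconj : ∀ z : ℂ, (Complex.conjCLE.toContinuousLinearMap : ℂ →L[ℝ] ℂ) z
        = (starRingEnd ℂ) z := fun z => rfl
      simp only [hconj, Pi.mul_apply, map_mul, map_add, Complex.conj_ofReal]
      generalize Complex.exp (Complex.I * ((‖x‖ ^ 2 / (4 * t) : ℝ) : ℂ)) = E at *
      generalize (starRingEnd ℂ) (deriv (fun s => u s ((1 / t) • x)) (1 / t)) = W at *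
      generalize (starRingEnd ℂ) (spaceLaplacian (u (1 / t)) ((1 / t) • x)) = L at *
      generalize (starRingEnd ℂ) (fderiv ℝ (u (1 / t)) ((1 / t) • x) x) = X at *
      generalize (starRingEnd ℂ) (u (1 / t) ((1 / t) • x)) = w at *
      generalize ‖u (1 / t) ((1 / t) • x)‖ ^ ((4 : ℝ) / d) = N at *
      have htC : (t : ℂ) ≠ 0 := by exact_mod_cast ht0.ne'
      push_cast at hnl ⊢
      generalize ((t ^ (-(d : ℝ) / 2) : ℝ) : ℂ) = A at *
      have hL : L = Complex.I * W - N * w := by linear_combination hnl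
      rw [hL]
      have hI : Complex.I ^ 2 = -1 := Complex.I_sq
      field_simp
      ring_nf
      simp only [hI]
      ring
    rw [← hnorm] at key
    exact key
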